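/- Let ψ : [0,∞) → [0,∞) be a convex admissible function and let f : ℝⁿ → ℝ ∪ {+∞} be a proper lower semicontinuous convex function with a global minimizer x̄, and let ∂f denote its convex subdifferential. Suppose there exist κ, r ∈ (0,∞) such that κ‖h‖²·ψ'_+(d(x, (∂f)⁻¹(v − h))) ≤ ⟨z, h⟩ for all (x,v) ∈ gph(∂f) ∩ (B(x̄,r) × B(0,r)), all h ∈ B(0,r), and all z ∈ ∂²f(x,v)(h), where the inequality is in [−∞,+∞] with the conventions d(x,∅) := +∞, ψ'_+(+∞) := sup_{t≥0} ψ'_+(t) ∈ (0,+∞], and 0·(+∞) := 0. Then f has φ-SLWP at x̄, where φ(t) := ∫₀ᵗ ψ(s) ds. -/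

import Mathlib

/-!
Write `S(u) = (∂f)⁻¹(u)`. The second-order condition makes `∂f` metrically regular near `(xb, 0)`
with gauge `ψ`; monotonicity makes `S` single-valued; a proximal step turns regularity into growth.

*Regularity* (`exists_preimage`). Let `v₀ ∈ ∂f(x₀)` and suppose `S(u)` misses `B(x₀, 2ρ)` although
`2‖v₀ - u‖ < κ ψ(ρ)`. Minimize `‖v - u‖ + (lam/2)‖x - x₀‖²` over the closed graph of `∂f`, with
`lam = κ ψ(ρ) / ρ²`. The minimizer `(x, v)` satisfies `‖x - x₀‖ < ρ` and `h = v - u ≠ 0`, and the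
optimality condition says `-lam ‖h‖ (x - x₀) ∈ ∂²f(x, v)(h)`. Since `v - h = u` and
`d(x, S(u)) ≥ ρ`, the hypothesis gives `κ ψ'_+(ρ) ≤ lam ‖x - x₀‖ < lam ρ = κ ψ(ρ)/ρ`, contradicting
`ψ(ρ)/ρ ≤ ψ'_+(ρ)`.

*Uniqueness* (`preimage_unique`). If `x₁ ≠ x₂` both lie in `S(u)`, regularity at `(x₂, u)` gives
points of `S(u + t(x₁ - x₂))` close to `x₂` for small `t > 0`, which monotonicity with respect to
`(x₁, u)` forbids. So `S(u) = {x_u}` for small `u`.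

*Growth*. Let `d = ‖x - x_u‖`. If the tilted gap at `x` were below `κ ψ(d/4) d / 8`, the proximal
point `x₁` of `x` with parameter `κ ψ(d/4) / d` (`exists_prox`) would satisfy `‖x₁ - x‖ < d/2` and
carry a subgradient within `κ ψ(d/4) / 2` of `u`, so regularity would place `x_u` within `d/2` of
`x₁`, contradicting `‖x - x_u‖ = d`. As `φ(t) ≤ t ψ(t)`, this bounds `φ(d/4)` by `2/κ` times the gap.
-/

open Set Filter Metric Topology
open scoped ENNReal RealInnerProductSpace

noncomputable section

/-- An admissible function `φ : [0,∞) → [0,∞)`: nondecreasing, `φ 0 = 0`, nonnegative,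
and `φ (t n) → 0` implies `t n → 0` for nonnegative sequences. -/
def Admissible (φ : ℝ → ℝ) : Prop :=
  MonotoneOn φ (Ici 0) ∧ φ 0 = 0 ∧ (∀ t, 0 ≤ t → 0 ≤ φ t) ∧
  ∀ u : ℕ → ℝ, (∀ n, 0 ≤ u n) → Tendsto (fun n => φ (u n)) atTop (𝓝 0) →
    Tendsto u atTop (𝓝 0)

/-- Proper lower semicontinuous extended-real-valued function. -/
def ProperLsc {X : Type*} [TopologicalSpace X] (f : X → EReal) : Prop :=
  (∃ x, f x ≠ ⊤) ∧ (∀ x, f x ≠ ⊥) ∧ LowerSemicontinuous f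

/-- The right derivative `φ'_+(t)`. -/
def rightDer (φ : ℝ → ℝ) (t : ℝ) : ℝ := derivWithin φ (Ioi t) t

/-- The extension of `ψ` to `[0,∞]` with `ψ(∞) := sup_{t ≥ 0} ψ t`, with values in `[0,∞]`. -/
def psiE (ψ : ℝ → ℝ) (d : ℝ≥0∞) : ℝ≥0∞ :=
  if d = ⊤ then ⨆ t ∈ Ici (0:ℝ), ENNReal.ofReal (ψ t)
  else ENNReal.ofReal (ψ d.toReal)

/-- `F` is metrically ψ-regular at `(xb, yb)`. -/
def MetricReg {X Y : Type*} [NormedAddCommGroup X] [NormedAddCommGroup Y]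
    (ψ : ℝ → ℝ) (F : X → Set Y) (xb : X) (yb : Y) : Prop :=
  ∃ r > (0:ℝ), ∃ τ > (0:ℝ), ∃ κ > (0:ℝ),
    ∀ x ∈ ball xb r, ∀ y ∈ ball yb r,
      psiE ψ (ENNReal.ofReal τ * EMetric.infEdist x {x' | y ∈ F x'}) ≤
        ENNReal.ofReal κ * EMetric.infEdist y (F x)

variable {n : ℕ}

/-- The Fréchet subdifferential of `f` at `x` (in Euclidean space). -/
def frechetSubE (f : EuclideanSpace ℝ (Fin n) → EReal) (x : EuclideanSpace ℝ (Fin n)) :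
    Set (EuclideanSpace ℝ (Fin n)) :=
  {v | ∃ a : ℝ, f x = (a : EReal) ∧ ∀ ε > (0:ℝ), ∃ ρ > (0:ℝ), ∀ y, ‖y - x‖ < ρ →
    ((a + ⟪v, y - x⟫ - ε * ‖y - x‖ : ℝ) : EReal) ≤ f y}

/-- The Mordukhovich limiting subdifferential of `f` at `x`. -/
def limSubE (f : EuclideanSpace ℝ (Fin n) → EReal) (x : EuclideanSpace ℝ (Fin n)) :
    Set (EuclideanSpace ℝ (Fin n)) :=
  {v | ∃ xk vk : ℕ → EuclideanSpace ℝ (Fin n),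
    (∀ k, vk k ∈ frechetSubE f (xk k)) ∧ Tendsto xk atTop (𝓝 x) ∧
    Tendsto (fun k => f (xk k)) atTop (𝓝 (f x)) ∧ Tendsto vk atTop (𝓝 v)}

/-- The Fréchet normal cone to a subset of `ℝⁿ × ℝⁿ`. -/
def frechetNormal2 (S : Set (EuclideanSpace ℝ (Fin n) × EuclideanSpace ℝ (Fin n)))
    (s0 : EuclideanSpace ℝ (Fin n) × EuclideanSpace ℝ (Fin n)) :
    Set (EuclideanSpace ℝ (Fin n) × EuclideanSpace ℝ (Fin n)) :=
  {w | ∀ ε > (0:ℝ), ∃ ρ > (0:ℝ), ∀ s ∈ S, ‖s - s0‖ < ρ →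
    ⟪w.1, s.1 - s0.1⟫ + ⟪w.2, s.2 - s0.2⟫ ≤ ε * ‖s - s0‖}

/-- The limiting (Mordukhovich) normal cone to a subset of `ℝⁿ × ℝⁿ`. -/
def limNormal2 (S : Set (EuclideanSpace ℝ (Fin n) × EuclideanSpace ℝ (Fin n)))
    (s0 : EuclideanSpace ℝ (Fin n) × EuclideanSpace ℝ (Fin n)) :
    Set (EuclideanSpace ℝ (Fin n) × EuclideanSpace ℝ (Fin n)) :=
  {w | ∃ sk wk : ℕ → EuclideanSpace ℝ (Fin n) × EuclideanSpace ℝ (Fin n),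
    (∀ k, sk k ∈ S ∧ wk k ∈ frechetNormal2 S (sk k)) ∧
    Tendsto sk atTop (𝓝 s0) ∧ Tendsto wk atTop (𝓝 w)}

/-- The graph of a set-valued map. -/
def gphSV (F : EuclideanSpace ℝ (Fin n) → Set (EuclideanSpace ℝ (Fin n))) :
    Set (EuclideanSpace ℝ (Fin n) × EuclideanSpace ℝ (Fin n)) :=
  {p | p.2 ∈ F p.1}

/-- The second subdifferential associated with a subdifferential map `F`:
`∂²f(x,v)(h) = {z : (z,-h) ∈ Ñ(gph F, (x,v))}`. -/
def secondSub (F : EuclideanSpace ℝ (Fin n) → Set (EuclideanSpace ℝ (Fin n)))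
    (x v h : EuclideanSpace ℝ (Fin n)) : Set (EuclideanSpace ℝ (Fin n)) :=
  {z | (z, -h) ∈ limNormal2 (gphSV F) (x, v)}

open scoped Classical

/-- `ψ'_+(d(x,S))` as an extended real, with the conventions `d(x,∅) = +∞` and
`ψ'_+(+∞) = sup_{t ≥ 0} ψ'_+(t)`. -/
def rightDerDist (ψ : ℝ → ℝ) (x : EuclideanSpace ℝ (Fin n))
    (S : Set (EuclideanSpace ℝ (Fin n))) : EReal :=
  if S.Nonempty then ((rightDer ψ (infDist x S) : ℝ) : EReal)
  else ⨆ t ∈ Ici (0:ℝ), ((rightDer ψ t : ℝ) : EReal)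

/-- The convex subdifferential of `f` at `x` in Euclidean space. -/
def subdiffE (f : EuclideanSpace ℝ (Fin n) → EReal) (x : EuclideanSpace ℝ (Fin n)) :
    Set (EuclideanSpace ℝ (Fin n)) :=
  {v | f x ≠ ⊤ ∧ ∀ y, f x + ((⟪v, y - x⟫ : ℝ) : EReal) ≤ f y}

/-- The tilted function `f_{u}(x) = f(x) - ⟨u, x⟩` in Euclidean space. -/
def tiltI (f : EuclideanSpace ℝ (Fin n) → EReal) (u x : EuclideanSpace ℝ (Fin n)) : EReal :=
  f x - ((⟪u, x⟫ : ℝ) : EReal)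

/-- Convexity of an `EReal`-valued function. -/
def ConvexE {X : Type*} [AddCommGroup X] [Module ℝ X] (f : X → EReal) : Prop :=
  ∀ x y : X, ∀ a b : ℝ, 0 ≤ a → 0 ≤ b → a + b = 1 →
    f (a • x + b • y) ≤ ((a : ℝ) : EReal) * f x + ((b : ℝ) : EReal) * f y

/-! ### Convex subgradients of extended-real-valued functions -/

lemma ereal_real_of_ne {a : EReal} (h1 : a ≠ ⊤) (h2 : a ≠ ⊥) : ∃ b : ℝ, a = (b : EReal) :=
  ⟨a.toReal, (EReal.coe_toReal h1 h2).symm⟩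

/-- The subgradient inequality, tested only at points of the domain and written in `ℝ`. -/
lemma mem_subdiffE_iff {f : EuclideanSpace ℝ (Fin n) → EReal} (hbot : ∀ x, f x ≠ ⊥)
    {x v : EuclideanSpace ℝ (Fin n)} {a : ℝ} (ha : f x = (a : EReal)) :
    v ∈ subdiffE f x ↔ ∀ y (c : ℝ), f y = (c : EReal) → a + ⟪v, y - x⟫ ≤ c := by
  constructor
  · rintro ⟨-, h⟩ y c hc
    have := h y
    rw [ha, hc] at this
    exact_mod_cast this
  · intro h
    refine ⟨by rw [ha]; exact EReal.coe_ne_top a, fun y => ?_⟩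
    by_cases hy : f y = ⊤
    · rw [hy]; exact le_top
    · obtain ⟨c, hc⟩ := ereal_real_of_ne hy (hbot y)
      rw [ha, hc]
      exact_mod_cast h y c hc

lemma subdiffE_monotone {f : EuclideanSpace ℝ (Fin n) → EReal} (hbot : ∀ x, f x ≠ ⊥)
    {x y v w : EuclideanSpace ℝ (Fin n)} (hv : v ∈ subdiffE f x) (hw : w ∈ subdiffE f y) :
    0 ≤ ⟪v - w, x - y⟫ := by
  obtain ⟨a, ha⟩ := ereal_real_of_ne hv.1 (hbot x)
  obtain ⟨b, hb⟩ := ereal_real_of_ne hw.1 (hbot y)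
  have h1 := (mem_subdiffE_iff hbot ha).1 hv y b hb
  have h2 := (mem_subdiffE_iff hbot hb).1 hw x a ha
  have h3 : ⟪v - w, x - y⟫ = -⟪v, y - x⟫ - ⟪w, x - y⟫ := by
    rw [inner_sub_left, ← neg_sub y x, inner_neg_right]
  linarith

lemma isClosed_gph_subdiffE {f : EuclideanSpace ℝ (Fin n) → EReal} (hf : ProperLsc f) :
    IsClosed (gphSV (subdiffE f)) := by
  obtain ⟨⟨x₀, hx₀⟩, hbot, hlsc⟩ := hf
  have key : gphSV (subdiffE f) = ⋂ (y : EuclideanSpace ℝ (Fin n)) (c : ℝ) (_ : f y = (c : EReal)),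
      (fun p : EuclideanSpace ℝ (Fin n) × EuclideanSpace ℝ (Fin n) =>
        (p.1, ((c - ⟪p.2, y - p.1⟫ : ℝ) : EReal))) ⁻¹' {q | f q.1 ≤ q.2} := by
    ext ⟨x, v⟩
    simp only [mem_iInter, mem_preimage, mem_setOf_eq]
    constructor
    · intro hv y c hc
      obtain ⟨a, ha⟩ := ereal_real_of_ne hv.1 (hbot x)
      have := (mem_subdiffE_iff hbot ha).1 hv y c hc
      rw [ha]
      exact_mod_cast (by linarith : a ≤ c - ⟪v, y - x⟫)
    · intro h
      obtain ⟨c₀, hc₀⟩ := ereal_real_of_ne hx₀ (hbot x₀)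
      have hxt : f x ≠ ⊤ := ((h x₀ c₀ hc₀).trans_lt (EReal.coe_lt_top _)).ne
      obtain ⟨a, ha⟩ := ereal_real_of_ne hxt (hbot x)
      refine (mem_subdiffE_iff hbot ha).2 fun y c hc => ?_
      have := h y c hc
      rw [ha] at this
      have : a ≤ c - ⟪v, y - x⟫ := by exact_mod_cast this
      linarith
  rw [key]
  refine isClosed_iInter fun y => isClosed_iInter fun c => isClosed_iInter fun _ => ?_
  refine hlsc.isClosed_epigraph.preimage ?_
  refine continuous_fst.prodMk (continuous_coe_real_ereal.comp ?_)
  fun_prop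

/-- Proximal step with a localisation: if `u` is a subgradient at `xu` and the tilted gap of `x₀`
is less than `lam / 2 * R ^ 2`, then the proximal point `x₁` of `x₀` for the tilted function lies
within `R` of `x₀`, and Fermat's rule provides a subgradient there. -/
lemma exists_prox {f : EuclideanSpace ℝ (Fin n) → EReal} (hf : ProperLsc f) (hfconv : ConvexE f)
    {u xu x₀ : EuclideanSpace ℝ (Fin n)} (hu : u ∈ subdiffE f xu) {a b lam R : ℝ}
    (hxu : f xu = (b : EReal)) (hx₀ : f x₀ = (a : EReal)) (hlam : 0 < lam) (hR : 0 < R)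
    (hgap : a - ⟪u, x₀⟫ - (b - ⟪u, xu⟫) < lam / 2 * R ^ 2) :
    ∃ x₁, ‖x₁ - x₀‖ < R ∧ u - lam • (x₁ - x₀) ∈ subdiffE f x₁ := by
  obtain ⟨-, hbot, hlsc⟩ := hf
  have hmin := (mem_subdiffE_iff hbot hxu).1 hu
  set q : EuclideanSpace ℝ (Fin n) → ℝ := fun x => lam / 2 * ‖x - x₀‖ ^ 2 - ⟪u, x⟫ with hq
  have hqc : Continuous q := by fun_prop
  have hF : LowerSemicontinuous fun x => f x + (q x : EReal) := by
    refine hlsc.add' (continuous_coe_real_ereal.comp hqc).lowerSemicontinuous fun x => ?_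
    exact EReal.continuousAt_add (Or.inr (EReal.coe_ne_bot _)) (Or.inr (EReal.coe_ne_top _))
  obtain ⟨x₁, -, hx₁⟩ := (hF.lowerSemicontinuousOn (closedBall x₀ R)).exists_isMinOn
    ⟨x₀, mem_closedBall_self hR.le⟩ (isCompact_closedBall x₀ R)
  have h10 : f x₁ + (q x₁ : EReal) ≤ f x₀ + (q x₀ : EReal) := hx₁ (mem_closedBall_self hR.le)
  have hx₁t : f x₁ ≠ ⊤ := by
    intro h
    rw [h, EReal.top_add_coe, hx₀, ← EReal.coe_add] at h10
    exact EReal.coe_ne_top _ (top_le_iff.1 h10)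
  obtain ⟨c, hc⟩ := ereal_real_of_ne hx₁t (hbot x₁)
  rw [hc, hx₀] at h10
  have h10' : c + q x₁ ≤ a + q x₀ := by exact_mod_cast h10
  have hq0 : q x₀ = -⟪u, x₀⟫ := by simp [hq]
  -- Outside the ball the quadratic term alone exceeds the gap, so `x₁` is a global minimizer.
  have hglob : ∀ y (d : ℝ), f y = (d : EReal) → c + q x₁ ≤ d + q y := by
    intro y d hd
    by_cases hy : y ∈ closedBall x₀ R
    · have := hx₁ hy
      simp only [mem_setOf_eq, hc, hd] at this
      exact_mod_cast this
    · rw [mem_closedBall, dist_eq_norm, not_le] at hy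
      have h1 := hmin y d hd
      rw [inner_sub_right] at h1
      have h2 : lam / 2 * R ^ 2 ≤ lam / 2 * ‖y - x₀‖ ^ 2 := by gcongr
      simp only [hq] at *
      linarith
  refine ⟨x₁, ?_, ?_⟩
  · have h1 := hmin x₁ c hc
    rw [inner_sub_right] at h1
    have h2 : lam / 2 * ‖x₁ - x₀‖ ^ 2 < lam / 2 * R ^ 2 := by
      simp only [hq] at *
      linarith
    have h3 : ‖x₁ - x₀‖ ^ 2 < R ^ 2 := lt_of_mul_lt_mul_left h2 (by positivity)
    exact lt_of_pow_lt_pow_left₀ 2 hR.le h3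
  · refine (mem_subdiffE_iff hbot hc).2 fun y d hd => ?_
    have hstep : ∀ t : ℝ, 0 < t → t ≤ 1 →
        0 ≤ (d - c - ⟪u - lam • (x₁ - x₀), y - x₁⟫) + t * (lam / 2 * ‖y - x₁‖ ^ 2) := by
      intro t ht ht1
      have hcv := hfconv x₁ y (1 - t) t (by linarith) ht.le (by ring)
      rw [hc, hd, ← EReal.coe_mul, ← EReal.coe_mul, ← EReal.coe_add] at hcv
      obtain ⟨e, he⟩ := ereal_real_of_ne (hcv.trans_lt (EReal.coe_lt_top _)).ne (hbot _)
      rw [he] at hcv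
      have hcv' : e ≤ (1 - t) * c + t * d := by exact_mod_cast hcv
      have h1 := hglob _ e he
      have hx : (1 - t) • x₁ + t • y = x₁ + t • (y - x₁) := by
        rw [sub_smul, smul_sub, one_smul]; abel
      have hn : ‖x₁ + t • (y - x₁) - x₀‖ ^ 2 =
          ‖x₁ - x₀‖ ^ 2 + 2 * (t * ⟪x₁ - x₀, y - x₁⟫) + t ^ 2 * ‖y - x₁‖ ^ 2 := by
        have : x₁ + t • (y - x₁) - x₀ = (x₁ - x₀) + t • (y - x₁) := by abel
        rw [this, norm_add_sq_real, inner_smul_right, norm_smul, mul_pow, Real.norm_eq_abs, sq_abs]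
      simp only [hq] at h1
      rw [hx, hn, inner_add_right, inner_smul_right] at h1
      have h2 : ⟪u - lam • (x₁ - x₀), y - x₁⟫ = ⟪u, y - x₁⟫ - lam * ⟪x₁ - x₀, y - x₁⟫ := by
        rw [inner_sub_left, real_inner_smul_left]
      rw [h2]
      have h3 : 0 ≤ t * ((d - c - (⟪u, y - x₁⟫ - lam * ⟪x₁ - x₀, y - x₁⟫))
          + t * (lam / 2 * ‖y - x₁‖ ^ 2)) := by nlinarith
      exact nonneg_of_mul_nonneg_right h3 ht
    have hlim : Tendsto (fun t : ℝ => (d - c - ⟪u - lam • (x₁ - x₀), y - x₁⟫)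
        + t * (lam / 2 * ‖y - x₁‖ ^ 2)) (𝓝[>] 0)
        (𝓝 ((d - c - ⟪u - lam • (x₁ - x₀), y - x₁⟫) + 0 * (lam / 2 * ‖y - x₁‖ ^ 2))) := by
      apply Tendsto.mono_left _ nhdsWithin_le_nhds
      apply Continuous.tendsto
      fun_prop
    have h0 := ge_of_tendsto hlim (b := 0) (by
      filter_upwards [Ioc_mem_nhdsGT (zero_lt_one : (0:ℝ) < 1)] with t ht
      exact hstep t ht.1 ht.2)
    linarith

/-! ### The gauge -/

lemma Admissible.pos {ψ : ℝ → ℝ} (h : Admissible ψ) {t : ℝ} (ht : 0 < t) : 0 < ψ t := by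
  refine lt_of_le_of_ne (h.2.2.1 t ht.le) fun h0 => ?_
  have := h.2.2.2 (fun _ => t) (fun _ => ht.le) (by simp [← h0])
  exact ht.ne' (tendsto_nhds_unique tendsto_const_nhds this)

lemma div_le_rightDer {ψ : ℝ → ℝ} (hadm : Admissible ψ) (hconv : ConvexOn ℝ (Ici 0) ψ)
    {ρ s : ℝ} (hρ : 0 < ρ) (hs : ρ ≤ s) : ψ ρ / ρ ≤ rightDer ψ s := by
  have hi : ∀ t : ℝ, 0 < t → t ∈ interior (Ici (0:ℝ)) := fun t ht => by
    rw [interior_Ici]; exact ht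
  have h1 : rightDer ψ ρ ≤ rightDer ψ s :=
    hconv.monotoneOn_rightDeriv (hi ρ hρ) (hi s (hρ.trans_le hs)) hs
  refine le_trans ?_ h1
  rw [rightDer, hconv.rightDeriv_eq_sInf_slope_of_mem_interior (hi ρ hρ)]
  refine le_csInf ⟨_, mem_image_of_mem _ ⟨(by simp; linarith : ρ + 1 ∈ Ici (0:ℝ)), by linarith⟩⟩ ?_
  rintro _ ⟨y, ⟨hy, hρy⟩, rfl⟩
  have := hconv.slope_mono_adjacent (mem_Ici.2 le_rfl) hy hρ hρy
  rw [slope_def_field]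
  simpa [hadm.2.1] using this

/-- `ψ(ρ)/ρ` bounds `ψ'_+` of the distance from below as soon as the set keeps distance `ρ`; this
covers the empty set. -/
lemma div_le_rightDerDist {ψ : ℝ → ℝ} (hadm : Admissible ψ) (hconv : ConvexOn ℝ (Ici 0) ψ)
    {ρ : ℝ} (hρ : 0 < ρ) {x : EuclideanSpace ℝ (Fin n)} {S : Set (EuclideanSpace ℝ (Fin n))}
    (hS : ∀ y ∈ S, ρ ≤ dist x y) : ((ψ ρ / ρ : ℝ) : EReal) ≤ rightDerDist ψ x S := by
  unfold rightDerDist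
  split_ifs with hne
  · exact_mod_cast div_le_rightDer hadm hconv hρ ((le_infDist hne).2 hS)
  · exact (EReal.coe_le_coe_iff.2 (div_le_rightDer hadm hconv hρ le_rfl)).trans
      (le_iSup₂ (f := fun t (_ : t ∈ Ici (0:ℝ)) => ((rightDer ψ t : ℝ) : EReal)) ρ hρ.le)

lemma integral_le_mul {ψ : ℝ → ℝ} (hadm : Admissible ψ) {t : ℝ} (ht : 0 ≤ t) :
    ∫ s in (0:ℝ)..t, ψ s ≤ ψ t * t := by
  have := intervalIntegral.norm_integral_le_of_norm_le_const (a := 0) (b := t) (f := ψ) (C := ψ t)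
    (fun s hs => by
      rw [uIoc_of_le ht] at hs
      rw [Real.norm_eq_abs, abs_of_nonneg (hadm.2.2.1 s hs.1.le)]
      exact hadm.1 hs.1.le ht hs.2)
  rw [sub_zero, abs_of_nonneg ht] at this
  exact (le_abs_self _).trans this

/-! ### Metric regularity and single-valuedness of the inverse subdifferential -/

/-- A minimizer of `‖v - u‖ + lam / 2 * ‖x - x₀‖ ^ 2` over a set `G` yields a (proximal, hence
limiting) normal to `G`. -/
lemma normal_of_isMin {G : Set (EuclideanSpace ℝ (Fin n) × EuclideanSpace ℝ (Fin n))}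
    {x₀ u : EuclideanSpace ℝ (Fin n)} {lam : ℝ} (hlam : 0 < lam)
    {p : EuclideanSpace ℝ (Fin n) × EuclideanSpace ℝ (Fin n)} (hp : p ∈ G)
    (hmin : ∀ q ∈ G, ‖p.2 - u‖ + lam / 2 * ‖p.1 - x₀‖ ^ 2 ≤
      ‖q.2 - u‖ + lam / 2 * ‖q.1 - x₀‖ ^ 2) :
    (-(‖p.2 - u‖ * lam) • (p.1 - x₀), -(p.2 - u)) ∈ limNormal2 G p := by
  refine ⟨fun _ => p, fun _ => _, fun _ => ⟨hp, ?_⟩, tendsto_const_nhds, tendsto_const_nhds⟩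
  set h := p.2 - u with hh
  intro ε hε
  set C := 1 / 2 + ‖h‖ * (lam / 2) with hC
  have hCpos : 0 < C := by positivity
  refine ⟨ε / C, by positivity, fun s hs hsp => ?_⟩
  have hm := hmin s hs
  have e1 : ‖s.1 - x₀‖ ^ 2 =
      ‖p.1 - x₀‖ ^ 2 + 2 * ⟪p.1 - x₀, s.1 - p.1⟫ + ‖s.1 - p.1‖ ^ 2 := by
    rw [← norm_add_sq_real]; congr 2; abel
  have e2 : ‖s.2 - u‖ ^ 2 = ‖h‖ ^ 2 + 2 * ⟪h, s.2 - p.2⟫ + ‖s.2 - p.2‖ ^ 2 := by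
    rw [← norm_add_sq_real, hh]; congr 2; abel
  -- The squared norm linearises `‖s.2 - u‖` through `2 * ‖h‖ * ‖s.2 - u‖ ≤ ‖h‖² + ‖s.2 - u‖²`.
  have e3 : 2 * ‖h‖ * ‖s.2 - u‖ ≤ ‖h‖ ^ 2 + ‖s.2 - u‖ ^ 2 := two_mul_le_add_sq _ _
  have e4 := mul_le_mul_of_nonneg_left hm (norm_nonneg h)
  rw [e1] at e4
  have n1 : ‖s.1 - p.1‖ ≤ ‖s - p‖ := norm_fst_le (s - p)
  have n2 : ‖s.2 - p.2‖ ≤ ‖s - p‖ := norm_snd_le (s - p)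
  have n1' : ‖s.1 - p.1‖ ^ 2 ≤ ‖s - p‖ ^ 2 := by gcongr
  have n2' : ‖s.2 - p.2‖ ^ 2 ≤ ‖s - p‖ ^ 2 := by gcongr
  have n1'' : ‖h‖ * (lam / 2) * ‖s.1 - p.1‖ ^ 2 ≤ ‖h‖ * (lam / 2) * ‖s - p‖ ^ 2 := by gcongr
  have n3 : C * ‖s - p‖ ^ 2 ≤ ε * ‖s - p‖ := by
    have : C * ‖s - p‖ ≤ ε := by
      rw [lt_div_iff₀ hCpos] at hsp; linarith
    nlinarith [norm_nonneg (s - p)]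
  simp only [inner_neg_left, real_inner_smul_left, neg_mul, neg_smul]
  refine le_trans ?_ n3
  rw [hC]
  nlinarith

/-- Local metric regularity: from `(x₀, v₀)` in the graph, every `u` with
`2 * ‖v₀ - u‖ < κ * ψ ρ` has a preimage within `2 * ρ` of `x₀`. -/
lemma exists_preimage {ψ : ℝ → ℝ} (hadm : Admissible ψ) (hconv : ConvexOn ℝ (Ici 0) ψ)
    {f : EuclideanSpace ℝ (Fin n) → EReal} (hf : ProperLsc f)
    {xb : EuclideanSpace ℝ (Fin n)} {κ r : ℝ} (hκ : 0 < κ)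
    (hyp : ∀ x v h z, v ∈ subdiffE f x → x ∈ ball xb r →
      v ∈ ball (0 : EuclideanSpace ℝ (Fin n)) r →
      h ∈ ball (0 : EuclideanSpace ℝ (Fin n)) r →
      z ∈ secondSub (subdiffE f) x v h →
      ((κ * ‖h‖ ^ 2 : ℝ) : EReal) * rightDerDist ψ x {x' | v - h ∈ subdiffE f x'} ≤
        ((⟪z, h⟫ : ℝ) : EReal))
    {x₀ v₀ u : EuclideanSpace ℝ (Fin n)} {ρ : ℝ} (hρ : 0 < ρ) (hv₀ : v₀ ∈ subdiffE f x₀)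
    (hx₀ : ‖x₀ - xb‖ + ρ ≤ r) (hvu : 2 * ‖v₀ - u‖ < κ * ψ ρ) (hur : ‖u‖ + ‖v₀ - u‖ < r) :
    ∃ x, u ∈ subdiffE f x ∧ ‖x - x₀‖ < 2 * ρ := by
  by_contra! hno
  have hψ := hadm.pos hρ
  set lam := κ * ψ ρ / ρ ^ 2 with hlamdef
  have hlam : 0 < lam := by positivity
  have hlamρ : lam * ρ ^ 2 = κ * ψ ρ := by rw [hlamdef]; field_simp
  set F : EuclideanSpace ℝ (Fin n) × EuclideanSpace ℝ (Fin n) → ℝ :=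
    fun p => ‖p.2 - u‖ + lam / 2 * ‖p.1 - x₀‖ ^ 2 with hF
  have hFc : Continuous F := by fun_prop
  have hF0 : F (x₀, v₀) = ‖v₀ - u‖ := by simp [hF]
  set K := gphSV (subdiffE f) ∩ closedBall x₀ ρ ×ˢ closedBall u ‖v₀ - u‖ with hK
  have hKc : IsCompact K :=
    ((isCompact_closedBall x₀ ρ).prod (isCompact_closedBall u _)).inter_left
      (isClosed_gph_subdiffE hf)
  have h0K : (x₀, v₀) ∈ K :=
    ⟨hv₀, mem_closedBall_self hρ.le, by simp [dist_eq_norm]⟩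
  obtain ⟨p, hpK, hpmin⟩ := hKc.exists_isMinOn ⟨_, h0K⟩ hFc.continuousOn
  have hp0 : F p ≤ ‖v₀ - u‖ := hF0 ▸ hpmin h0K
  have hglob : ∀ q ∈ gphSV (subdiffE f), F p ≤ F q := by
    intro q hq
    by_cases hqK : q ∈ K
    · exact hpmin hqK
    refine hp0.trans ?_
    by_contra! hlt
    have a1 : 0 ≤ lam / 2 * ‖q.1 - x₀‖ ^ 2 := by positivity
    have a2 := norm_nonneg (q.2 - u)
    refine hqK ⟨hq, ?_, ?_⟩
    · rw [mem_closedBall, dist_eq_norm]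
      by_contra! hgt
      have : lam / 2 * ρ ^ 2 ≤ lam / 2 * ‖q.1 - x₀‖ ^ 2 := by gcongr
      simp only [hF] at hlt
      linarith
    · rw [mem_closedBall, dist_eq_norm]
      simp only [hF] at hlt
      linarith
  have hpG : p.2 ∈ subdiffE f p.1 := hpK.1
  have hnorm := normal_of_isMin hlam hpK.1 hglob
  set h := p.2 - u with hh
  have hvh : p.2 - h = u := by rw [hh]; abel
  have hh_le : ‖h‖ ≤ ‖v₀ - u‖ := by
    have := hpK.2.2
    rwa [mem_closedBall, dist_eq_norm] at this
  have hx_lt : ‖p.1 - x₀‖ < ρ := by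
    have h1 : lam / 2 * ‖p.1 - x₀‖ ^ 2 < lam / 2 * ρ ^ 2 := by
      simp only [hF] at hp0
      linarith [norm_nonneg (p.2 - u)]
    exact lt_of_pow_lt_pow_left₀ 2 hρ.le (lt_of_mul_lt_mul_left h1 (by positivity))
  have hhpos : 0 < ‖h‖ := by
    rw [norm_pos_iff]
    intro h0
    have : u ∈ subdiffE f p.1 := by rw [h0, sub_zero] at hvh; exact hvh ▸ hpG
    linarith [hno _ this]
  have hfar : ∀ y ∈ {x' | p.2 - h ∈ subdiffE f x'}, ρ ≤ dist p.1 y := by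
    intro y hy
    rw [mem_setOf_eq, hvh] at hy
    have h1 := hno y hy
    have h2 := dist_triangle y p.1 x₀
    rw [dist_comm y p.1, dist_eq_norm y x₀, dist_eq_norm p.1 x₀] at h2
    linarith
  have hin := hyp p.1 p.2 h _ hpG
    (by
      rw [mem_ball, dist_eq_norm]
      have := norm_add_le (p.1 - x₀) (x₀ - xb)
      rw [sub_add_sub_cancel] at this
      linarith)
    (by
      rw [mem_ball_zero_iff]
      have := norm_add_le h u
      rw [hh, sub_add_cancel, ← hh] at this
      linarith)
    (by rw [mem_ball_zero_iff]; linarith [norm_nonneg u]) hnorm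
  have hlow : ((κ * ‖h‖ ^ 2 : ℝ) : EReal) * ((ψ ρ / ρ : ℝ) : EReal) ≤
      ((κ * ‖h‖ ^ 2 : ℝ) : EReal) * rightDerDist ψ p.1 {x' | p.2 - h ∈ subdiffE f x'} :=
    mul_le_mul_of_nonneg_left (div_le_rightDerDist hadm hconv hρ hfar)
      (by exact_mod_cast (by positivity : 0 ≤ κ * ‖h‖ ^ 2))
  have hfin := hlow.trans hin
  rw [← EReal.coe_mul, EReal.coe_le_coe_iff, real_inner_smul_left] at hfin
  have hcs : -⟪p.1 - x₀, h⟫ ≤ ‖p.1 - x₀‖ * ‖h‖ :=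
    (neg_le_abs _).trans (abs_real_inner_le_norm _ _)
  have hcs' : ‖h‖ * lam * (-⟪p.1 - x₀, h⟫) ≤ ‖h‖ * lam * (‖p.1 - x₀‖ * ‖h‖) := by gcongr
  have hlt : ‖h‖ * lam * (‖p.1 - x₀‖ * ‖h‖) < ‖h‖ * lam * (ρ * ‖h‖) := by gcongr
  have heq : κ * ‖h‖ ^ 2 * (ψ ρ / ρ) = ‖h‖ * lam * (ρ * ‖h‖) := by
    rw [hlamdef]; field_simp
  linarith

/-- Kenderov's argument: local solvability at `(x₂, u)` and monotonicity force `x₂` to be the only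
preimage of `u`. -/
lemma preimage_unique {ψ : ℝ → ℝ} (hadm : Admissible ψ) (hconv : ConvexOn ℝ (Ici 0) ψ)
    {f : EuclideanSpace ℝ (Fin n) → EReal} (hf : ProperLsc f)
    {xb : EuclideanSpace ℝ (Fin n)} {κ r : ℝ} (hκ : 0 < κ)
    (hyp : ∀ x v h z, v ∈ subdiffE f x → x ∈ ball xb r →
      v ∈ ball (0 : EuclideanSpace ℝ (Fin n)) r →
      h ∈ ball (0 : EuclideanSpace ℝ (Fin n)) r →
      z ∈ secondSub (subdiffE f) x v h →
      ((κ * ‖h‖ ^ 2 : ℝ) : EReal) * rightDerDist ψ x {x' | v - h ∈ subdiffE f x'} ≤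
        ((⟪z, h⟫ : ℝ) : EReal))
    {x₁ x₂ u : EuclideanSpace ℝ (Fin n)} (h₁ : u ∈ subdiffE f x₁) (h₂ : u ∈ subdiffE f x₂)
    (hx₂ : ‖x₂ - xb‖ < r) (hu : ‖u‖ < r) : x₁ = x₂ := by
  by_contra hne
  have hD : 0 < ‖x₁ - x₂‖ := norm_pos_iff.2 (sub_ne_zero.2 hne)
  set D := ‖x₁ - x₂‖ with hDdef
  obtain ⟨ρ, hρ, hρlt⟩ := exists_between
    (lt_min (sub_pos.2 hx₂) (by positivity : 0 < D / 4))
  obtain ⟨hρ1, hρ2⟩ := lt_min_iff.1 hρlt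
  have hψ := hadm.pos hρ
  obtain ⟨t, ht, htlt⟩ := exists_between
    (lt_min (by linarith : 0 < (r - ‖u‖) / 2) (by positivity : 0 < κ * ψ ρ / 2))
  obtain ⟨ht1, ht2⟩ := lt_min_iff.1 htlt
  -- Perturb `u` by `t` in the direction from `x₂` to `x₁`.
  set w := u + (t / D) • (x₁ - x₂) with hw
  have hwn : ‖u - w‖ = t := by
    rw [hw, sub_add_cancel_left, norm_neg, norm_smul, Real.norm_eq_abs,
      abs_of_pos (by positivity), ← hDdef]
    field_simp
  have hwn2 : ‖w‖ ≤ ‖u‖ + t := by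
    have := norm_sub_le u (u - w)
    rw [sub_sub_cancel, hwn] at this
    exact this
  obtain ⟨x, hx, hxd⟩ := exists_preimage hadm hconv hf hκ hyp (u := w) hρ h₂ (by linarith)
    (by rw [hwn]; linarith) (by rw [hwn]; linarith)
  have hm := subdiffE_monotone hf.2.1 hx h₁
  have e1 : w - u = (t / D) • (x₁ - x₂) := by rw [hw]; abel
  have e2 : x - x₁ = (x - x₂) - (x₁ - x₂) := by abel
  rw [e1, real_inner_smul_left, e2, inner_sub_right, real_inner_self_eq_norm_sq, ← hDdef] at hm
  have hm' := nonneg_of_mul_nonneg_right hm (by positivity : 0 < t / D)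
  have hcs := real_inner_le_norm (x₁ - x₂) (x - x₂)
  rw [← hDdef] at hcs
  nlinarith

/-- Corollary 6.2. -/
theorem stmt_14
    (ψ : ℝ → ℝ) (hadm : Admissible ψ) (hconv : ConvexOn ℝ (Ici 0) ψ)
    (f : EuclideanSpace ℝ (Fin n) → EReal) (hf : ProperLsc f) (hfconv : ConvexE f)
    (xb : EuclideanSpace ℝ (Fin n)) (hmin : ∀ y, f xb ≤ f y)
    (κ r : ℝ) (hκ : 0 < κ) (hr : 0 < r)
    (hyp : ∀ x v h z, v ∈ subdiffE f x → x ∈ ball xb r →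
      v ∈ ball (0 : EuclideanSpace ℝ (Fin n)) r →
      h ∈ ball (0 : EuclideanSpace ℝ (Fin n)) r →
      z ∈ secondSub (subdiffE f) x v h →
      ((κ * ‖h‖ ^ 2 : ℝ) : EReal) * rightDerDist ψ x {x' | v - h ∈ subdiffE f x'} ≤
        ((⟪z, h⟫ : ℝ) : EReal)) :
    ∃ δ > (0:ℝ), ∃ r' > (0:ℝ), ∃ τ > (0:ℝ), ∃ κ' > (0:ℝ),
      ∃ sel : EuclideanSpace ℝ (Fin n) → EuclideanSpace ℝ (Fin n), sel 0 = xb ∧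
        ∀ u ∈ ball (0 : EuclideanSpace ℝ (Fin n)) δ,
          sel u ∈ closedBall xb r' ∧
          ∀ x ∈ closedBall xb r',
            ((∫ s in (0:ℝ)..(κ' * ‖x - sel u‖), ψ s : ℝ) : EReal) ≤
              ((τ : ℝ) : EReal) * (tiltI f u x - tiltI f u (sel u)) := by
  have hbot := hf.2.1
  have hxbt : f xb ≠ ⊤ := by
    obtain ⟨y, hy⟩ := hf.1
    exact ne_top_of_le_ne_top hy (hmin y)
  have h0 : (0 : EuclideanSpace ℝ (Fin n)) ∈ subdiffE f xb :=
    ⟨hxbt, fun y => by simpa using hmin y⟩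
  -- A radius `ρ₀` keeping all proximal points in `B(xb, r)` and all their subgradients in `B(0, r)`.
  obtain ⟨ρ₀, hρ₀, hρr, hψr⟩ : ∃ ρ₀ > (0:ℝ), 5 * ρ₀ ≤ r ∧ κ * ψ ρ₀ ≤ r := by
    have hψ1 := hadm.pos one_pos
    obtain ⟨ρ₀, hρ₀, hlt⟩ := exists_between (lt_min one_pos
      (lt_min (by positivity : 0 < r / 5) (by positivity : 0 < r / (κ * ψ 1))))
    obtain ⟨h1, h23⟩ := lt_min_iff.1 hlt
    obtain ⟨h2, h3⟩ := lt_min_iff.1 h23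
    refine ⟨ρ₀, hρ₀, by linarith, ?_⟩
    have hc := hconv.2 (mem_Ici.2 le_rfl) (mem_Ici.2 zero_le_one)
      (by linarith : 0 ≤ 1 - ρ₀) hρ₀.le (by ring)
    simp only [smul_eq_mul, mul_zero, mul_one, zero_add, hadm.2.1] at hc
    rw [lt_div_iff₀ (by positivity)] at h3
    nlinarith
  have hψ₀ := hadm.pos hρ₀
  obtain ⟨δ, hδ, hδlt⟩ := exists_between
    (lt_min (by positivity : 0 < r / 2) (by positivity : 0 < κ * ψ ρ₀ / 2))
  obtain ⟨hδ1, hδ2⟩ := lt_min_iff.1 hδlt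
  have hex : ∀ u : EuclideanSpace ℝ (Fin n), ∃ x, ‖u‖ < δ →
      u ∈ subdiffE f x ∧ ‖x - xb‖ < 2 * ρ₀ := by
    intro u
    by_cases hu : ‖u‖ < δ
    · obtain ⟨x, hx⟩ := exists_preimage hadm hconv hf hκ hyp (u := u) hρ₀ h0
        (by rw [sub_self, norm_zero]; linarith) (by rw [zero_sub, norm_neg]; linarith)
        (by rw [zero_sub, norm_neg]; linarith)
      exact ⟨x, fun _ => hx⟩
    · exact ⟨xb, fun h => absurd h hu⟩
  choose sel hsel using hex
  refine ⟨δ, hδ, 2 * ρ₀, by positivity, 2 / κ, by positivity, 1 / 4, by norm_num, sel, ?_, ?_⟩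
  · exact preimage_unique hadm hconv hf hκ hyp (hsel 0 (by simpa using hδ)).1 h0
      (by simpa using hr) (by simpa using hr)
  intro u hu
  rw [mem_ball_zero_iff] at hu
  obtain ⟨hus, hsd⟩ := hsel u hu
  refine ⟨by rw [mem_closedBall, dist_eq_norm]; exact hsd.le, fun x hx => ?_⟩
  rw [mem_closedBall, dist_eq_norm] at hx
  obtain ⟨b, hb⟩ := ereal_real_of_ne hus.1 (hbot _)
  by_cases hxt : f x = ⊤
  · have e1 : tiltI f u x - tiltI f u (sel u) = ⊤ := by
      unfold tiltI
      rw [hxt, hb, EReal.top_sub_coe, ← EReal.coe_sub, EReal.top_sub_coe]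
    rw [e1, EReal.coe_mul_top_of_pos (by positivity)]
    exact le_top
  obtain ⟨a, ha⟩ := ereal_real_of_ne hxt (hbot x)
  unfold tiltI
  rw [ha, hb, ← EReal.coe_sub, ← EReal.coe_sub, ← EReal.coe_sub, ← EReal.coe_mul,
    EReal.coe_le_coe_iff]
  rcases eq_or_ne x (sel u) with hxe | hxe
  · have hab : a = b := by
      rw [hxe, hb] at ha
      exact_mod_cast ha.symm
    simp [hxe, hab]
  have hd : 0 < ‖x - sel u‖ := norm_pos_iff.2 (sub_ne_zero.2 hxe)
  set d := ‖x - sel u‖ with hddef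
  have hψd := hadm.pos (by positivity : 0 < d / 4)
  -- The quantitative heart: the gap is at least `κ * ψ (d / 4) * d / 8`.
  have hgap : κ * ψ (d / 4) * d / 8 ≤ a - ⟪u, x⟫ - (b - ⟪u, sel u⟫) := by
    by_contra! hlt
    obtain ⟨x₁, hx₁, hv₁⟩ := exists_prox hf hfconv hus hb ha
      (lam := κ * ψ (d / 4) / d) (R := d / 2) (by positivity) (by positivity)
      (by
        refine hlt.trans_eq ?_
        field_simp
        norm_num)
    have hd4 : d ≤ 4 * ρ₀ := by
      have := norm_sub_le (x - xb) (sel u - xb)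
      rw [sub_sub_sub_cancel_right] at this
      linarith
    have hψle : ψ (d / 4) ≤ ψ ρ₀ :=
      hadm.1 (mem_Ici.2 (by positivity)) (mem_Ici.2 hρ₀.le) (by linarith)
    have hκψ : κ * ψ (d / 4) ≤ κ * ψ ρ₀ := by gcongr
    have hnv : ‖u - (κ * ψ (d / 4) / d) • (x₁ - x) - u‖ < κ * ψ (d / 4) / 2 := by
      rw [sub_sub_cancel_left, norm_neg, norm_smul, Real.norm_eq_abs, abs_of_pos (by positivity)]
      calc κ * ψ (d / 4) / d * ‖x₁ - x‖ < κ * ψ (d / 4) / d * (d / 2) := by gcongr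
        _ = κ * ψ (d / 4) / 2 := by field_simp
    have hx₁b : ‖x₁ - xb‖ ≤ ‖x₁ - x‖ + ‖x - xb‖ := by
      have := norm_add_le (x₁ - x) (x - xb)
      rwa [sub_add_sub_cancel] at this
    obtain ⟨y, hy, hyd⟩ := exists_preimage hadm hconv hf hκ hyp (u := u) (ρ := d / 4)
      (by positivity) hv₁ (by linarith) (by linarith) (by linarith)
    have hyx : y = sel u := preimage_unique hadm hconv hf hκ hyp hy hus (by linarith) (by linarith)
    -- The preimage is within `d / 2` of `x₁`, which is within `d / 2` of `x`.
    rw [hyx, norm_sub_rev] at hyd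
    have := norm_sub_le_norm_sub_add_norm_sub x x₁ (sel u)
    rw [norm_sub_rev x x₁] at this
    linarith
  have hint := integral_le_mul hadm (by positivity : 0 ≤ 1 / 4 * d)
  refine hint.trans ?_
  have e : 1 / 4 * d = d / 4 := by ring
  rw [e]
  calc ψ (d / 4) * (d / 4) = 2 / κ * (κ * ψ (d / 4) * d / 8) := by field_simp; norm_num
    _ ≤ _ := by gcongr

end
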